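/- If a framework G(p) in ℝ^d (with all points pairwise distinct) is infinitesimally bearing rigid, then it is globally bearing rigid. -/

import Mathlib

/-- `projL x` is the orthogonal projection matrix
`P_x = I - (x/‖x‖)(x/‖x‖)ᵀ`, i.e. `projL x y = y - ⟪x,y⟫/‖x‖² • x`. -/
noncomputable def projL {d : ℕ} (x : EuclideanSpace ℝ (Fin d)) :
    EuclideanSpace ℝ (Fin d) →ₗ[ℝ] EuclideanSpace ℝ (Fin d) :=
  LinearMap.id - (‖x‖ ^ 2)⁻¹ •
    (LinearMap.toSpanSingleton ℝ (EuclideanSpace ℝ (Fin d)) x ∘ₗ (innerSL ℝ x).toLinearMap)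

/-- The bearing rigidity matrix `R(p) = diag(P_{g_k}/‖e_k‖)(H ⊗ I_d)` of the framework
whose `k`-th oriented edge goes from vertex `(E k).1` to vertex `(E k).2`
(so `e_k = p_{(E k).2} - p_{(E k).1}` and `g_k = e_k/‖e_k‖`), viewed as a linear map
`ℝ^{dn} → ℝ^{dm}`. -/
noncomputable def bearingMap {d n : ℕ} {ι : Type*} (E : ι → Fin n × Fin n)
    (p : Fin n → EuclideanSpace ℝ (Fin d)) :
    (Fin n → EuclideanSpace ℝ (Fin d)) →ₗ[ℝ] (ι → EuclideanSpace ℝ (Fin d)) :=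
  LinearMap.pi fun k =>
    (‖p (E k).2 - p (E k).1‖⁻¹ • projL (p (E k).2 - p (E k).1)) ∘ₗ
      ((LinearMap.proj (R := ℝ) (φ := fun _ : Fin n => EuclideanSpace ℝ (Fin d)) (E k).2) -
       (LinearMap.proj (R := ℝ) (φ := fun _ : Fin n => EuclideanSpace ℝ (Fin d)) (E k).1))

/-- The linear map `w ↦ 1_n ⊗ w` stacking `n` copies of `w ∈ ℝ^d`; its range is
`span{1_n ⊗ I_d}`, the space of translational motions. -/
noncomputable def constLM (d n : ℕ) :
    EuclideanSpace ℝ (Fin d) →ₗ[ℝ] (Fin n → EuclideanSpace ℝ (Fin d)) :=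
  LinearMap.pi fun _ => LinearMap.id

/-!
Up to the nonzero factor `‖e_k‖⁻¹`, the `k`-th block of `R(p) p'` is `P_{e_k} (p'_j - p'_i)`. Hence
`p'` is bearing equivalent to `p` iff `R(p) p' = 0`, and bearing congruent to `p` iff the bearing
rigidity matrix of the complete graph on the same points annihilates `p'`. Translations and scalings
of `p` are annihilated whatever the graph is, so when they exhaust the null space of `R(p)`, every
bearing equivalent framework is bearing congruent.
-/

theorem projL_self {d : ℕ} (x : EuclideanSpace ℝ (Fin d)) : projL x x = 0 := by
  rcases eq_or_ne x 0 with rfl | hx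
  · exact map_zero _
  · simp [projL, smul_smul, hx]

section BearingMap

variable {d n : ℕ} {ι : Type*} (E : ι → Fin n × Fin n)
  (p p' : Fin n → EuclideanSpace ℝ (Fin d))

theorem bearingMap_apply (k : ι) :
    bearingMap E p p' k =
      ‖p (E k).2 - p (E k).1‖⁻¹ • projL (p (E k).2 - p (E k).1) (p' (E k).2 - p' (E k).1) :=
  rfl

theorem range_constLM_le_ker_bearingMap :
    LinearMap.range (constLM d n) ≤ LinearMap.ker (bearingMap E p) := by
  rintro _ ⟨w, rfl⟩
  refine LinearMap.mem_ker.mpr (funext fun k => ?_)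
  simp [bearingMap_apply, constLM]

theorem self_mem_ker_bearingMap : p ∈ LinearMap.ker (bearingMap E p) := by
  refine LinearMap.mem_ker.mpr (funext fun k => ?_)
  rw [bearingMap_apply, projL_self, smul_zero, Pi.zero_apply]

theorem range_constLM_sup_span_le_ker_bearingMap :
    LinearMap.range (constLM d n) ⊔ Submodule.span ℝ {p} ≤ LinearMap.ker (bearingMap E p) :=
  sup_le (range_constLM_le_ker_bearingMap E p)
    ((Submodule.span_singleton_le_iff_mem _ _).mpr (self_mem_ker_bearingMap E p))

/-- Bearing equivalence of the frameworks `G(p)` and `G(p')`, where the edges of `G` are listed by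
`E` with an orientation, as in `bearingMap`. -/
def IsBearingEquivalent : Prop :=
  ∀ k, projL (p (E k).2 - p (E k).1) (p' (E k).2 - p' (E k).1) = 0

/-- Bearing congruence of two configurations: the condition of bearing equivalence, imposed on all
pairs of distinct vertices. -/
def IsBearingCongruent : Prop :=
  ∀ i j, i ≠ j → projL (p i - p j) (p' i - p' j) = 0

/-- The edges of the complete graph on `Fin n`, each listed in both orientations, so that bearing
congruence becomes a case of bearing equivalence. -/
def completeEdges (n : ℕ) : {e : Fin n × Fin n // e.1 ≠ e.2} → Fin n × Fin n :=
  Subtype.val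

variable {E p p'}

theorem mem_ker_bearingMap_iff_isBearingEquivalent (hp : ∀ k, p (E k).1 ≠ p (E k).2) :
    p' ∈ LinearMap.ker (bearingMap E p) ↔ IsBearingEquivalent E p p' := by
  have inv_edge_length_ne_zero (k : ι) : ‖p (E k).2 - p (E k).1‖⁻¹ ≠ 0 :=
    inv_ne_zero (norm_ne_zero_iff.mpr (sub_ne_zero.mpr (hp k).symm))
  simp only [LinearMap.mem_ker, funext_iff, bearingMap_apply, Pi.zero_apply,
    smul_eq_zero_iff_right (inv_edge_length_ne_zero _), IsBearingEquivalent]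

theorem isBearingEquivalent_completeEdges_iff :
    IsBearingEquivalent (completeEdges n) p p' ↔ IsBearingCongruent p p' :=
  ⟨fun h i j hij => h ⟨(j, i), hij.symm⟩, fun h e => h _ _ e.2.symm⟩

theorem mem_ker_bearingMap_completeEdges_iff_isBearingCongruent (hp : Function.Injective p) :
    p' ∈ LinearMap.ker (bearingMap (completeEdges n) p) ↔ IsBearingCongruent p p' :=
  (mem_ker_bearingMap_iff_isBearingEquivalent fun e => hp.ne e.2).trans
    isBearingEquivalent_completeEdges_iff

end BearingMap

/-- An infinitesimally bearing rigid framework (pairwise distinct points)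
is globally bearing rigid. -/
theorem infinitesimally_rigid_implies_globally_rigid {d n m : ℕ} (hd : 2 ≤ d) (hn : 2 ≤ n)
    (E : Fin m → Fin n × Fin n) (hE : ∀ k, (E k).1 ≠ (E k).2)
    (p : Fin n → EuclideanSpace ℝ (Fin d))
    (hp : ∀ i j : Fin n, i ≠ j → p i ≠ p j)
    (hibr : LinearMap.ker (bearingMap E p) =
      LinearMap.range (constLM d n) ⊔ Submodule.span ℝ {p}) :
    ∀ p' : Fin n → EuclideanSpace ℝ (Fin d),
      (∀ k, projL (p (E k).2 - p (E k).1) (p' (E k).2 - p' (E k).1) = 0) →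
      ∀ i j : Fin n, i ≠ j → projL (p i - p j) (p' i - p' j) = 0 := by
  intro p' hequiv
  have hp_inj : Function.Injective p := Function.injective_iff_pairwise_ne.mpr hp
  have hmem : p' ∈ LinearMap.ker (bearingMap E p) :=
    (mem_ker_bearingMap_iff_isBearingEquivalent fun k => hp_inj.ne (hE k)).mpr hequiv
  rw [hibr] at hmem
  exact (mem_ker_bearingMap_completeEdges_iff_isBearingCongruent hp_inj).mp
    (range_constLM_sup_span_le_ker_bearingMap (completeEdges n) p hmem)
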